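/- For any encoder f, the BPR loss satisfies L_BPR(f) ≥ E_{(u,i)∼p_pos, i⁻∼p_item}[−1 + log(e + e^{⟨f̃(u), f̃(i⁻)⟩})], and equality holds if and only if f is perfectly aligned, i.e., f̃(u) = f̃(i) almost surely over (u,i) ∼ p_pos. -/

import Mathlib

open MeasureTheory
open scoped RealInnerProductSpace

/-- The logistic sigmoid function `sigmoid(t) = 1 / (1 + e^{-t})`. -/
noncomputable def sigmoid (t : ℝ) : ℝ := 1 / (1 + Real.exp (-t))

/-- `ℓ²`-normalization onto the unit sphere: `f̃(x) = f(x) / ‖f(x)‖`. -/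
noncomputable def normed {E : Type*} [NormedAddCommGroup E] [NormedSpace ℝ E]
    (x : E) : E := ‖x‖⁻¹ • x

/-- The BPR loss of the encoder `(fU, fI)`:
`L_BPR = E_{(u,i) ∼ p_pos, i⁻ ∼ p_item} [-log sigmoid(⟪f̃(u), f̃(i)⟫ - ⟪f̃(u), f̃(i⁻)⟫)]`,
where `p_item` is the second marginal of `p_pos` and the negative item `i⁻` is
sampled independently of `(u, i)`. -/
noncomputable def bprLoss {U I : Type*} [MeasurableSpace U] [MeasurableSpace I]
    {d : ℕ} (p_pos : Measure (U × I)) (fU : U → EuclideanSpace ℝ (Fin d))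
    (fI : I → EuclideanSpace ℝ (Fin d)) : ℝ :=
  ∫ p, (∫ j, -Real.log (sigmoid (⟪normed (fU p.1), normed (fI p.2)⟫ -
      ⟪normed (fU p.1), normed (fI j)⟫)) ∂(p_pos.map Prod.snd)) ∂p_pos

/-- An encoder `(fU, fI)` is perfectly aligned if `f̃(u) = f̃(i)` almost surely
over `(u, i) ∼ p_pos`. -/
def PerfectlyAligned {U I : Type*} [MeasurableSpace U] [MeasurableSpace I]
    {d : ℕ} (p_pos : Measure (U × I)) (fU : U → EuclideanSpace ℝ (Fin d))
    (fI : I → EuclideanSpace ℝ (Fin d)) : Prop :=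
  ∀ᵐ p ∂p_pos, normed (fU p.1) = normed (fI p.2)

/-!
The alignment score `⟪f̃(u), f̃(i)⟫` is at most `1`, with equality exactly when `f̃(u) = f̃(i)`.
Since `φ = -log ∘ sigmoid` is strictly decreasing, raising that score to `1` lowers the loss
`φ (⟪f̃(u), f̃(i)⟫ - ⟪f̃(u), f̃(i⁻)⟫)`, strictly so unless the pair was already aligned. The lower
bound is the mean of this extreme value, because `φ (1 - t) = -1 + log (e + e ^ t)`.
-/

theorem sigmoid_eq_real_sigmoid : sigmoid = Real.sigmoid :=
  funext fun t => one_div (1 + Real.exp (-t))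

theorem strictAnti_neg_log_sigmoid : StrictAnti fun t => -Real.log (sigmoid t) := by
  intro s t hst
  simp only [sigmoid_eq_real_sigmoid]
  exact neg_lt_neg (Real.log_lt_log (Real.sigmoid_pos s) (Real.sigmoid_strictMono hst))

theorem neg_log_sigmoid_sub (a b : ℝ) :
    -Real.log (sigmoid (a - b)) = -a + Real.log (Real.exp a + Real.exp b) := by
  have factor : Real.exp a + Real.exp b = Real.exp a * (1 + Real.exp (-(a - b))) := by
    rw [mul_add, mul_one, ← Real.exp_add, neg_sub, add_sub_cancel]
  rw [factor, Real.log_mul (by positivity) (by positivity), Real.log_exp, neg_add_cancel_left,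
    sigmoid, one_div, Real.log_inv, neg_neg]

theorem norm_normed {E : Type*} [NormedAddCommGroup E] [NormedSpace ℝ E] {x : E} (hx : x ≠ 0) :
    ‖normed x‖ = 1 :=
  NormedSpace.norm_normalize hx

theorem measurable_normed_comp {E : Type*} [NormedAddCommGroup E] [NormedSpace ℝ E]
    [MeasurableSpace E] [BorelSpace E] [SecondCountableTopology E]
    {Ω : Type*} [MeasurableSpace Ω] {f : Ω → E} (hf : Measurable f) :
    Measurable fun ω => normed (f ω) :=
  hf.norm.inv.smul hf

section IteratedIntegral

variable {X Y : Type*} [MeasurableSpace X] [MeasurableSpace Y] {μ : Measure X} {ν : Measure Y}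

theorem integral_integral_mono [SFinite μ] [SFinite ν] {F G : X → Y → ℝ}
    (hF : Integrable F.uncurry (μ.prod ν)) (hG : Integrable G.uncurry (μ.prod ν))
    (hFG : ∀ x y, F x y ≤ G x y) :
    ∫ x, ∫ y, F x y ∂ν ∂μ ≤ ∫ x, ∫ y, G x y ∂ν ∂μ := by
  rw [integral_integral hF, integral_integral hG]
  exact integral_mono hF hG fun z => hFG z.1 z.2

theorem integral_integral_eq_iff_of_le [SFinite μ] [SFinite ν] {F G : X → Y → ℝ}
    (hF : Integrable F.uncurry (μ.prod ν)) (hG : Integrable G.uncurry (μ.prod ν))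
    (hFG : ∀ x y, F x y ≤ G x y) :
    ∫ x, ∫ y, F x y ∂ν ∂μ = ∫ x, ∫ y, G x y ∂ν ∂μ ↔ ∀ᵐ x ∂μ, ∀ᵐ y ∂ν, F x y = G x y := by
  refine ⟨fun h => ?_, fun h => integral_congr_ae (h.mono fun _ => integral_congr_ae)⟩
  rw [integral_integral hF, integral_integral hG] at h
  exact Measure.ae_ae_of_ae_prod
    ((integral_eq_iff_of_ae_le hF hG (.of_forall fun z => hFG z.1 z.2)).1 h)

theorem integrable_comp_sub_of_antitone [IsFiniteMeasure μ] {φ : ℝ → ℝ} (hφ : Antitone φ)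
    {f g : X → ℝ} (hf : Measurable f) (hg : Measurable g) {a b c d : ℝ}
    (hf_mem : ∀ x, f x ∈ Set.Icc a b) (hg_mem : ∀ x, g x ∈ Set.Icc c d) :
    Integrable (fun x => φ (f x - g x)) μ :=
  .of_mem_Icc (φ (b - c)) (φ (a - d)) (hφ.measurable.comp (hf.sub hg)).aemeasurable
    (.of_forall fun x => ⟨hφ (sub_le_sub (hf_mem x).2 (hg_mem x).1),
      hφ (sub_le_sub (hf_mem x).1 (hg_mem x).2)⟩)

end IteratedIntegral

theorem bprLoss_ge_and_eq_iff_perfectlyAligned_general {E : Type*} [NormedAddCommGroup E]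
    [InnerProductSpace ℝ E] [MeasurableSpace E] [OpensMeasurableSpace E]
    [SecondCountableTopology E] {U I : Type*} [MeasurableSpace U] [MeasurableSpace I]
    (μ : Measure (U × I)) [IsFiniteMeasure μ] (ν : Measure I) [IsFiniteMeasure ν] [NeZero ν]
    {φ : ℝ → ℝ} (hφ : StrictAnti φ) {x : U → E} {y : I → E}
    (hx : Measurable x) (hy : Measurable y) (hx_norm : ∀ u, ‖x u‖ = 1) (hy_norm : ∀ i, ‖y i‖ = 1) :
    ∫ p, ∫ j, φ (⟪x p.1, y p.2⟫ - ⟪x p.1, y j⟫) ∂ν ∂μ ≥ ∫ p, ∫ j, φ (1 - ⟪x p.1, y j⟫) ∂ν ∂μ ∧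
    (∫ p, ∫ j, φ (⟪x p.1, y p.2⟫ - ⟪x p.1, y j⟫) ∂ν ∂μ = ∫ p, ∫ j, φ (1 - ⟪x p.1, y j⟫) ∂ν ∂μ ↔
      ∀ᵐ p ∂μ, x p.1 = y p.2) := by
  have score_mem (u i) : ⟪x u, y i⟫ ∈ Set.Icc (-1) 1 :=
    real_inner_mem_Icc_of_norm_eq_one (hx_norm u) (hy_norm i)
  have score_meas : Measurable fun q : (U × I) × I => ⟪x q.1.1, y q.2⟫ := by fun_prop
  have bound_int : Integrable (fun q : (U × I) × I => φ (1 - ⟪x q.1.1, y q.2⟫)) (μ.prod ν) :=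
    integrable_comp_sub_of_antitone hφ.antitone measurable_const score_meas
      (fun _ => Set.left_mem_Icc.2 le_rfl) (fun _ => score_mem _ _)
  have loss_int : Integrable
      (fun q : (U × I) × I => φ (⟪x q.1.1, y q.1.2⟫ - ⟪x q.1.1, y q.2⟫)) (μ.prod ν) :=
    integrable_comp_sub_of_antitone hφ.antitone (by fun_prop) score_meas
      (fun _ => score_mem _ _) (fun _ => score_mem _ _)
  have bound_le_loss (p : U × I) (j : I) :
      φ (1 - ⟪x p.1, y j⟫) ≤ φ (⟪x p.1, y p.2⟫ - ⟪x p.1, y j⟫) :=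
    hφ.antitone (sub_le_sub_right (score_mem p.1 p.2).2 _)
  have eq_iff_aligned (p : U × I) (j : I) :
      φ (1 - ⟪x p.1, y j⟫) = φ (⟪x p.1, y p.2⟫ - ⟪x p.1, y j⟫) ↔ x p.1 = y p.2 := by
    rw [hφ.injective.eq_iff, sub_left_inj, eq_comm,
      inner_eq_one_iff_of_norm_eq_one (hx_norm p.1) (hy_norm p.2)]
  refine ⟨integral_integral_mono bound_int loss_int bound_le_loss, ?_⟩
  rw [eq_comm, integral_integral_eq_iff_of_le bound_int loss_int bound_le_loss]
  simp only [eq_iff_aligned, Filter.eventually_const]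

/-- For any encoder `(fU, fI)` whose representations lie on the unit sphere
(`fU u ≠ 0`, `fI i ≠ 0`), the BPR loss satisfies
`L_BPR(f) ≥ E_{(u,i) ∼ p_pos, i⁻ ∼ p_item}[-1 + log(e + e^{⟪f̃(u), f̃(i⁻)⟫})]`,
with equality if and only if the encoder is perfectly aligned. -/
theorem bprLoss_ge_and_eq_iff_perfectlyAligned {d : ℕ} (hd : 2 ≤ d)
    {U I : Type*} [MeasurableSpace U] [MeasurableSpace I]
    (p_pos : Measure (U × I)) [IsProbabilityMeasure p_pos]
    (fU : U → EuclideanSpace ℝ (Fin d)) (fI : I → EuclideanSpace ℝ (Fin d))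
    (hfU : Measurable fU) (hfI : Measurable fI)
    (hU0 : ∀ u, fU u ≠ 0) (hI0 : ∀ i, fI i ≠ 0) :
    bprLoss p_pos fU fI ≥
      (∫ p, (∫ j, (-1 + Real.log (Real.exp 1 +
          Real.exp ⟪normed (fU p.1), normed (fI j)⟫)) ∂(p_pos.map Prod.snd))
        ∂p_pos) ∧
    (bprLoss p_pos fU fI =
        (∫ p, (∫ j, (-1 + Real.log (Real.exp 1 +
            Real.exp ⟪normed (fU p.1), normed (fI j)⟫)) ∂(p_pos.map Prod.snd))
          ∂p_pos) ↔
      PerfectlyAligned p_pos fU fI) := by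
  have : IsProbabilityMeasure (p_pos.map Prod.snd) :=
    Measure.isProbabilityMeasure_map measurable_snd.aemeasurable
  simpa only [bprLoss, PerfectlyAligned, neg_log_sigmoid_sub] using
    bprLoss_ge_and_eq_iff_perfectlyAligned_general p_pos (p_pos.map Prod.snd)
      strictAnti_neg_log_sigmoid (measurable_normed_comp hfU) (measurable_normed_comp hfI)
      (fun u => norm_normed (hU0 u)) (fun i => norm_normed (hI0 i))
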